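/- arXiv:2205.11904 — 2 statements merged into one kernel-verified Lean document; each statement's English description precedes it below -/
import Mathlib

section
/- Let (X,T) be a topological dynamical system with a compatible metric d. Then for every ε>0 and every ergodic T-invariant Borel probability measure μ, the upper Katok entropy satisfies h̄^K_μ(T,ε) ≤ PS_μ(T,d,ε). -/
open Filter MeasureTheory Set
open scoped ENNReal Topology

noncomputable section

namespace MMD

variable {X : Type*}

/-- The `n`-th Bowen metric `d_n(x,y) = max_{0 ≤ j ≤ n-1} d(T^j x, T^j y)`. -/
noncomputable def bowenDist [PseudoMetricSpace X] (T : X → X) (n : ℕ) (x y : X) : ℝ :=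
  ⨆ j : Fin n, dist (T^[(j : ℕ)] x) (T^[(j : ℕ)] y)

/-- `r_n(T,d,ε,Z)`: minimal cardinality of an `(n,ε)`-spanning set of `Z`. -/
noncomputable def spanNum [PseudoMetricSpace X] (T : X → X) (n : ℕ) (ε : ℝ) (Z : Set X) : ℕ :=
  sInf {k | ∃ E : Finset X, E.card = k ∧ ∀ z ∈ Z, ∃ y ∈ E, bowenDist T n z y < ε}

/-- `s_n(T,d,ε,Z)`: maximal cardinality of an `(n,ε)`-separated subset of `Z`. -/
noncomputable def sepNum [PseudoMetricSpace X] (T : X → X) (n : ℕ) (ε : ℝ) (Z : Set X) : ℕ :=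
  sSup {k | ∃ F : Finset X, ↑F ⊆ Z ∧ F.card = k ∧
    ∀ x ∈ F, ∀ y ∈ F, x ≠ y → ε ≤ bowenDist T n x y}

/-- `limsup_{n→∞} (1/n) log r_n(T,d,ε,X)`. -/
noncomputable def spanGrowth [PseudoMetricSpace X] (T : X → X) (ε : ℝ) : ℝ≥0∞ :=
  Filter.limsup (fun n : ℕ => ENNReal.ofReal (Real.log (spanNum T n ε Set.univ)) / (n : ℝ≥0∞))
    Filter.atTop

/-- Upper metric mean dimension. -/
noncomputable def mdimMUpper [PseudoMetricSpace X] (T : X → X) : ℝ≥0∞ :=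
  Filter.limsup (fun ε : ℝ => spanGrowth T ε / ENNReal.ofReal (Real.log (1 / ε)))
    (nhdsWithin 0 (Set.Ioi 0))

/-- Lower metric mean dimension. -/
noncomputable def mdimMLower [PseudoMetricSpace X] (T : X → X) : ℝ≥0∞ :=
  Filter.liminf (fun ε : ℝ => spanGrowth T ε / ENNReal.ofReal (Real.log (1 / ε)))
    (nhdsWithin 0 (Set.Ioi 0))

/-- A finite (Borel) partition given as a finite set of measurable, pairwise disjoint sets
covering the space. -/
def IsFinPartition {Y : Type*} [MeasurableSpace Y] (P : Finset (Set Y)) : Prop :=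
  (∀ s ∈ P, MeasurableSet s) ∧ (∀ s ∈ P, ∀ t ∈ P, s ≠ t → Disjoint s t) ∧
    ⋃₀ (P : Set (Set Y)) = Set.univ

/-- Mutual information `I(ξ;η)` of two random variables, as the supremum over finite
measurable partitions of the target spaces. -/
noncomputable def mutualInfo {Ω A B : Type*} [MeasurableSpace Ω] [MeasurableSpace A]
    [MeasurableSpace B] (P : Measure Ω) (ξ : Ω → A) (η : Ω → B) : ℝ≥0∞ :=
  ⨆ (p : Finset (Set A)) (_ : IsFinPartition p) (q : Finset (Set B)) (_ : IsFinPartition q),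
    ENNReal.ofReal (∑ s ∈ p, ∑ t ∈ q,
      (P (ξ ⁻¹' s ∩ η ⁻¹' t)).toReal *
        Real.log ((P (ξ ⁻¹' s ∩ η ⁻¹' t)).toReal /
          ((P (ξ ⁻¹' s)).toReal * (P (η ⁻¹' t)).toReal)))

/-- The `L^∞` rate distortion function `R_{μ,L∞}(ε,s)`: the infimum of `I(ξ;η)/n` over all
`n ≥ 1` and all joint distributions `ν` of `(ξ, (η_0,…,η_{n-1}))` such that `ξ` has law `μ`,
the `η_k` take (almost surely) finitely many values, and
`E(#{0 ≤ k ≤ n-1 : d(T^k ξ, η_k) ≥ ε}) < s n`. -/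
noncomputable def RDistLInftyS [PseudoMetricSpace X] [MeasurableSpace X] (T : X → X)
    (μ : Measure X) (ε s : ℝ) : ℝ≥0∞ :=
  ⨅ (n : ℕ) (_ : 0 < n) (ν : Measure (X × (Fin n → X))) (_ : IsProbabilityMeasure ν)
    (_ : ν.map Prod.fst = μ) (_ : ∃ S : Finset X, ν {p | ∀ k, p.2 k ∈ S} = 1)
    (_ : ∫⁻ p, (Nat.card {k : Fin n // ε ≤ dist (T^[(k : ℕ)] p.1) (p.2 k)} : ℝ≥0∞) ∂ν
        < ENNReal.ofReal (s * n)),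
    mutualInfo ν Prod.fst Prod.snd / (n : ℝ≥0∞)

/-- `R_{μ,L∞}(ε) = lim_{s→0} R_{μ,L∞}(ε,s)` (the limit equals the supremum over `s > 0`
by monotonicity). -/
noncomputable def RDistLInfty [PseudoMetricSpace X] [MeasurableSpace X] (T : X → X)
    (μ : Measure X) (ε : ℝ) : ℝ≥0∞ :=
  ⨆ (s : ℝ) (_ : 0 < s), RDistLInftyS T μ ε s

/-- The `L¹` rate distortion function `R_{μ,1}(ε)`. -/
noncomputable def RDistL1 [PseudoMetricSpace X] [MeasurableSpace X] (T : X → X)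
    (μ : Measure X) (ε : ℝ) : ℝ≥0∞ :=
  ⨅ (n : ℕ) (_ : 0 < n) (ν : Measure (X × (Fin n → X))) (_ : IsProbabilityMeasure ν)
    (_ : ν.map Prod.fst = μ) (_ : ∃ S : Finset X, ν {p | ∀ k, p.2 k ∈ S} = 1)
    (_ : ∫⁻ p, ∑ k : Fin n, ENNReal.ofReal (dist (T^[(k : ℕ)] p.1) (p.2 k)) ∂ν
        < ENNReal.ofReal (ε * n)),
    mutualInfo ν Prod.fst Prod.snd / (n : ℝ≥0∞)

/-- `R^δ_μ(T,n,ε)`: minimal number of Bowen `(n,ε)`-balls whose union has `μ`-measure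
greater than `1 - δ`. -/
noncomputable def katokNum [PseudoMetricSpace X] [MeasurableSpace X] (T : X → X)
    (μ : Measure X) (n : ℕ) (ε δ : ℝ) : ℕ :=
  sInf {k | ∃ E : Finset X, E.card = k ∧
    ENNReal.ofReal (1 - δ) < μ (⋃ x ∈ E, {y | bowenDist T n x y < ε})}

/-- `h̄^K_μ(T,ε,δ)`. -/
noncomputable def katokUpperD [PseudoMetricSpace X] [MeasurableSpace X] (T : X → X)
    (μ : Measure X) (ε δ : ℝ) : ℝ≥0∞ :=
  Filter.limsup (fun n : ℕ => ENNReal.ofReal (Real.log (katokNum T μ n ε δ)) / (n : ℝ≥0∞))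
    Filter.atTop

/-- `ḥ^K_μ(T,ε,δ)`. -/
noncomputable def katokLowerD [PseudoMetricSpace X] [MeasurableSpace X] (T : X → X)
    (μ : Measure X) (ε δ : ℝ) : ℝ≥0∞ :=
  Filter.liminf (fun n : ℕ => ENNReal.ofReal (Real.log (katokNum T μ n ε δ)) / (n : ℝ≥0∞))
    Filter.atTop

/-- `h̄^K_μ(T,ε) = lim_{δ→0} h̄^K_μ(T,ε,δ)` (equal to the supremum over `δ ∈ (0,1)` by
monotonicity). -/
noncomputable def katokUpper [PseudoMetricSpace X] [MeasurableSpace X] (T : X → X)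
    (μ : Measure X) (ε : ℝ) : ℝ≥0∞ :=
  ⨆ (δ : ℝ) (_ : δ ∈ Set.Ioo (0 : ℝ) 1), katokUpperD T μ ε δ

/-- `ḥ^K_μ(T,ε) = lim_{δ→0} ḥ^K_μ(T,ε,δ)`. -/
noncomputable def katokLower [PseudoMetricSpace X] [MeasurableSpace X] (T : X → X)
    (μ : Measure X) (ε : ℝ) : ℝ≥0∞ :=
  ⨆ (δ : ℝ) (_ : δ ∈ Set.Ioo (0 : ℝ) 1), katokLowerD T μ ε δ

/-- The empirical measure `(1/n) Σ_{j=0}^{n-1} δ_{T^j x}`. -/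
noncomputable def empMeas [MeasurableSpace X] (T : X → X) (n : ℕ) (x : X) : Measure X :=
  (n : ℝ≥0∞)⁻¹ • ∑ j ∈ Finset.range n, Measure.dirac (T^[j] x)

/-- Pfister–Sullivan entropy `PS_μ(T,d,ε)`: infimum over weak* open neighborhoods `F` of `μ`
of `limsup_n (1/n) log s_n(T,d,ε,X_{n,F})`, where
`X_{n,F} = {x : (1/n) Σ_{j<n} δ_{T^j x} ∈ F}`. -/
noncomputable def PSent [MetricSpace X] [MeasurableSpace X] [OpensMeasurableSpace X]
    (T : X → X) (μ : ProbabilityMeasure X) (ε : ℝ) : ℝ≥0∞ :=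
  ⨅ (F : Set (ProbabilityMeasure X)) (_ : IsOpen F) (_ : μ ∈ F),
    Filter.limsup (fun n : ℕ => ENNReal.ofReal (Real.log (sepNum T n ε
      {x : X | ∃ h : IsProbabilityMeasure (empMeas T n x),
        (⟨empMeas T n x, h⟩ : ProbabilityMeasure X) ∈ F})) / (n : ℝ≥0∞)) Filter.atTop

/-- Partition entropy `H_μ(P) = Σ_{A∈P} -μ(A) log μ(A)`. -/
noncomputable def entP [MeasurableSpace X] (μ : Measure X) (P : Finset (Set X)) : ℝ≥0∞ :=
  ∑ A ∈ P, ENNReal.ofReal (-((μ A).toReal * Real.log ((μ A).toReal)))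

/-- The join `P^n = ∨_{j=0}^{n-1} T^{-j} P`. -/
noncomputable def joinN (T : X → X) (P : Finset (Set X)) (n : ℕ) : Finset (Set X) :=
  letI : DecidableEq (Set X) := Classical.decEq _
  (Fintype.piFinset (fun _ : Fin n => P)).image (fun f => ⋂ j : Fin n, T^[(j : ℕ)] ⁻¹' f j)

/-- `h_μ(T,P) = lim_n H_μ(P^n)/n` (the limit exists and equals the liminf). -/
noncomputable def entRate [MeasurableSpace X] (T : X → X) (μ : Measure X)
    (P : Finset (Set X)) : ℝ≥0∞ :=
  Filter.liminf (fun n : ℕ => entP μ (joinN T P n) / (n : ℝ≥0∞)) Filter.atTop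

/-- `inf { h_μ(T,P) : P a finite Borel partition with diam P ≤ ε }`. -/
noncomputable def infEntRate [PseudoMetricSpace X] [MeasurableSpace X] (T : X → X)
    (μ : Measure X) (ε : ℝ) : ℝ≥0∞ :=
  ⨅ (P : Finset (Set X)) (_ : IsFinPartition P) (_ : ∀ s ∈ P, Metric.diam s ≤ ε),
    entRate T μ P

/-- Kolmogorov–Sinai entropy `h_μ(T)`. -/
noncomputable def ksEntropy [MeasurableSpace X] (T : X → X) (μ : Measure X) : ℝ≥0∞ :=
  ⨆ (P : Finset (Set X)) (_ : IsFinPartition P), entRate T μ P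

/-- A finite open cover. -/
def IsFinOpenCover [TopologicalSpace X] (α : Finset (Set X)) : Prop :=
  (∀ A ∈ α, IsOpen A) ∧ ⋃₀ (α : Set (Set X)) = Set.univ

/-- `ord(β) = max_x #{B ∈ β : x ∈ B} - 1`. -/
noncomputable def ordCover (β : Finset (Set X)) : ℕ :=
  sSup {k | ∃ x : X, Nat.card {B : Set X // B ∈ β ∧ x ∈ B} = k} - 1

/-- `D(α) = min_{β ≻ α} ord(β)`, over finite open covers `β` refining `α`. -/
noncomputable def Dcover [TopologicalSpace X] (α : Finset (Set X)) : ℕ :=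
  sInf {k | ∃ β : Finset (Set X), IsFinOpenCover β ∧ (∀ B ∈ β, ∃ A ∈ α, B ⊆ A) ∧
    ordCover β = k}

/-- Mean (topological) dimension `mdim(X,T) = sup_α lim_n D(α^n)/n`. -/
noncomputable def mdimTop [TopologicalSpace X] (T : X → X) : ℝ≥0∞ :=
  ⨆ (α : Finset (Set X)) (_ : IsFinOpenCover α),
    Filter.liminf (fun n : ℕ => (Dcover (joinN T α n) : ℝ≥0∞) / (n : ℝ≥0∞)) Filter.atTop

/-- The marker property for a homeomorphism. -/
def MarkerProperty [TopologicalSpace X] (T : X ≃ₜ X) : Prop :=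
  ∀ N : ℕ, 0 < N → ∃ U : Set X, IsOpen U ∧
    (∀ n : ℕ, 1 ≤ n → n ≤ N → U ∩ (⇑T)^[n] '' U = ∅) ∧
    ⋃ n : ℤ, ⇑(T.toEquiv ^ n) '' U = Set.univ

/-- Upper dimension `limsup_{ε→0} F(μ,ε)/log(1/ε)` associated with a candidate `F`. -/
noncomputable def dimFUpper [MeasurableSpace X] (F : Measure X → ℝ → ℝ≥0∞)
    (μ : Measure X) : ℝ≥0∞ :=
  Filter.limsup (fun ε : ℝ => F μ ε / ENNReal.ofReal (Real.log (1 / ε)))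
    (nhdsWithin 0 (Set.Ioi 0))

/-- Lower dimension `liminf_{ε→0} F(μ,ε)/log(1/ε)` associated with a candidate `F`. -/
noncomputable def dimFLower [MeasurableSpace X] (F : Measure X → ℝ → ℝ≥0∞)
    (μ : Measure X) : ℝ≥0∞ :=
  Filter.liminf (fun ε : ℝ => F μ ε / ENNReal.ofReal (Real.log (1 / ε)))
    (nhdsWithin 0 (Set.Ioi 0))

/-- A candidate function: for each invariant probability measure `μ`, `F(μ,·)` is
non-decreasing as `ε` decreases, and `F(μ,ε) → h_μ(T)` as `ε → 0⁺`. -/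
def IsCandidate [MeasurableSpace X] (T : X → X) (F : Measure X → ℝ → ℝ≥0∞) : Prop :=
  ∀ μ : Measure X, IsProbabilityMeasure μ → MeasurePreserving T μ μ →
    (∀ ε₁ ε₂ : ℝ, 0 < ε₁ → ε₁ ≤ ε₂ → F μ ε₂ ≤ F μ ε₁) ∧
    Filter.Tendsto (F μ) (nhdsWithin 0 (Set.Ioi 0)) (nhds (ksEntropy T μ))

end MMD

open MMD

/-!
By the mean ergodic theorem, the Birkhoff averages of a bounded continuous function along an ergodic
map converge in measure to its `μ`-integral. These averages are the integrals of the function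
against empirical measures, so for every weak* neighbourhood `F` of `μ` the set `X_{n,F}` eventually
has measure greater than `1 - δ`. A maximal `(n, ε)`-separated subset of `X_{n,F}` has every point
of `X_{n,F}` in one of its Bowen balls of radius `ε`, hence it competes in the definition of
`katokNum`, and `katokNum ≤ sepNum` for all large `n`.
-/

namespace MMD

section MeanErgodic

section LinearIsometry

variable {𝕜 H : Type*} [RCLike 𝕜] [NormedAddCommGroup H] [InnerProductSpace 𝕜 H]

/-- The closed subspace of vectors fixed by a linear isometry of an inner product space; it carries
the limits of the averages of the isometry. -/
def fixedSubspace (U : H →ₗᵢ[𝕜] H) : Submodule 𝕜 H :=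
  U.toContinuousLinearMap.eqLocus (1 : H →L[𝕜] H)

lemma mem_fixedSubspace {U : H →ₗᵢ[𝕜] H} {x : H} : x ∈ fixedSubspace U ↔ U x = x :=
  Iff.rfl

variable [CompleteSpace H]

instance (U : H →ₗᵢ[𝕜] H) : CompleteSpace (fixedSubspace U) :=
  inferInstanceAs (CompleteSpace (U.toContinuousLinearMap.eqLocus (1 : H →L[𝕜] H)))

lemma tendsto_birkhoffAverage_starProjection_fixedSubspace (U : H →ₗᵢ[𝕜] H) (x : H) :
    Tendsto (birkhoffAverage 𝕜 U _root_.id · x) atTop (𝓝 ((fixedSubspace U).starProjection x)) :=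
  U.toContinuousLinearMap.tendsto_birkhoffAverage_orthogonalProjection
    U.norm_toContinuousLinearMap_le x

end LinearIsometry

variable {Ω E : Type*} [MeasurableSpace Ω] {μ : Measure Ω} {T : Ω → Ω}

lemma birkhoffAverage_compMeasurePreserving_ae_eq {𝕜 : Type*} [NormedField 𝕜]
    [NormedAddCommGroup E] [NormedSpace 𝕜 E] {p : ℝ≥0∞} (hT : MeasurePreserving T μ μ)
    (g : Lp E p μ) (n : ℕ) :
    (birkhoffAverage 𝕜 (Lp.compMeasurePreserving T hT) _root_.id n g : Lp E p μ)
      =ᵐ[μ] birkhoffAverage 𝕜 T g n := by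
  have iterate_ae (k : ℕ) : (Lp.compMeasurePreserving T hT)^[k] g =ᵐ[μ] g ∘ T^[k] := by
    rw [Lp.compMeasurePreserving_iterate]
    exact Lp.coeFn_compMeasurePreserving g (hT.iterate k)
  filter_upwards
    [Lp.coeFn_smul (n : 𝕜)⁻¹ (birkhoffSum (Lp.compMeasurePreserving T hT) _root_.id n g),
    Lp.coeFn_finsetSum (Finset.range n) fun k => (Lp.compMeasurePreserving T hT)^[k] g,
    ae_all_iff.2 iterate_ae] with x hsmul hsum hiterate
  simp only [birkhoffAverage, birkhoffSum, id_eq] at hsmul ⊢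
  rw [hsmul, Pi.smul_apply, hsum, Finset.sum_apply]
  simp only [hiterate, Function.comp_apply]

variable [NormedAddCommGroup E] [InnerProductSpace ℝ E]

/-- The Koopman operator `g ↦ g ∘ T` of a measure-preserving map, acting on the real inner
product space `L²(μ; E)`. Its averages are the Birkhoff averages of `T`. -/
def koopman (hT : MeasurePreserving T μ μ) : Lp E 2 μ →ₗᵢ[ℝ] Lp E 2 μ :=
  Lp.compMeasurePreservingₗᵢ ℝ T hT

lemma koopman_const [IsFiniteMeasure μ] (hT : MeasurePreserving T μ μ) (c : E) :
    koopman hT (Lp.const 2 μ c) = Lp.const 2 μ c :=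
  rfl

lemma exists_eq_const_of_koopman_eq [IsFiniteMeasure μ] (hT : Ergodic T μ) {g : Lp E 2 μ}
    (hg : koopman hT.toMeasurePreserving g = g) : ∃ c, g = Lp.const 2 μ c := by
  obtain ⟨c, hc⟩ := hT.eq_const_of_compMeasurePreserving_eq (congrArg Subtype.val hg)
  exact ⟨c, Subtype.ext hc⟩

variable [CompleteSpace E]

lemma inner_const_eq_inner_integral [IsFiniteMeasure μ] (c : E) (g : Lp E 2 μ) :
    inner ℝ (Lp.const 2 μ c) g = inner ℝ c (∫ x, g x ∂μ) := by
  rw [← indicatorConstLp_univ, L2.inner_indicatorConstLp_eq_inner_setIntegral, setIntegral_univ]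

lemma starProjection_fixedSubspace_koopman [IsProbabilityMeasure μ] (hT : Ergodic T μ)
    (g : Lp E 2 μ) :
    (fixedSubspace (koopman hT.toMeasurePreserving)).starProjection g =
      Lp.const 2 μ (∫ x, g x ∂μ) := by
  refine Submodule.eq_starProjection_of_mem_of_inner_eq_zero
    (mem_fixedSubspace.2 (koopman_const _ _)) fun w hw => ?_
  obtain ⟨c, rfl⟩ := exists_eq_const_of_koopman_eq hT (mem_fixedSubspace.1 hw)
  have integral_const_coe : ∫ x, Lp.const 2 μ (∫ x, g x ∂μ) x ∂μ = ∫ x, g x ∂μ := by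
    rw [integral_congr_ae (Lp.coeFn_const 2 μ _)]
    simp only [Function.const_apply, integral_const, probReal_univ, one_smul]
  rw [real_inner_comm, inner_sub_right, inner_const_eq_inner_integral,
    inner_const_eq_inner_integral, integral_const_coe, sub_self]

theorem tendstoInMeasure_birkhoffAverage [IsProbabilityMeasure μ] (hT : Ergodic T μ) {f : Ω → E}
    (hf : MemLp f 2 μ) :
    TendstoInMeasure μ (birkhoffAverage ℝ T f) atTop fun _ => ∫ x, f x ∂μ := by
  have tendsto_Lp := tendsto_birkhoffAverage_starProjection_fixedSubspace
    (koopman hT.toMeasurePreserving) (hf.toLp f)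
  rw [starProjection_fixedSubspace_koopman hT,
    integral_congr_ae hf.coeFn_toLp] at tendsto_Lp
  refine (tendstoInMeasure_of_tendsto_Lp tendsto_Lp).congr (fun n => ?_) (Lp.coeFn_const 2 μ _)
  exact (birkhoffAverage_compMeasurePreserving_ae_eq hT.toMeasurePreserving _ n).trans
    (hT.quasiMeasurePreserving.birkhoffAverage_ae_eq_of_ae_eq ℝ hf.coeFn_toLp n)

end MeanErgodic

section InMeasure

variable {ι Ω : Type*} [MeasurableSpace Ω]

/-- The filter on `ι × Ω` of the sets `S` with `μ {ω | (i, ω) ∉ S} → 0` along `l`. Convergence along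
it is convergence in measure, with no metric on the target. -/
def inMeasure (μ : Measure Ω) (l : Filter ι) : Filter (ι × Ω) :=
  Filter.comk (fun S => Tendsto (fun i => μ (Prod.mk i ⁻¹' S)) l (𝓝 0))
    (by simp only [preimage_empty, measure_empty, tendsto_const_nhds])
    (fun _ hS _ hsub => tendsto_of_tendsto_of_tendsto_of_le_of_le tendsto_const_nhds hS
      (fun _ => zero_le) fun _ => measure_mono (preimage_mono hsub))
    (fun _ hS _ hS' => tendsto_of_tendsto_of_tendsto_of_le_of_le tendsto_const_nhds
      (add_zero (0 : ℝ≥0∞) ▸ hS.add hS') (fun _ => zero_le) fun _ => measure_union_le _ _)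

lemma mem_inMeasure {μ : Measure Ω} {l : Filter ι} {S : Set (ι × Ω)} :
    S ∈ inMeasure μ l ↔ Tendsto (fun i => μ (Prod.mk i ⁻¹' S)ᶜ) l (𝓝 0) :=
  Iff.rfl

lemma tendsto_inMeasure_nhds_iff {Y : Type*} [PseudoMetricSpace Y] {μ : Measure Ω} {l : Filter ι}
    {f : ι × Ω → Y} {y : Y} :
    Tendsto f (inMeasure μ l) (𝓝 y) ↔ TendstoInMeasure μ (fun i ω => f (i, ω)) l fun _ => y := by
  simp only [Metric.nhds_basis_ball.tendsto_right_iff, tendstoInMeasure_iff_dist,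
    Filter.Eventually, mem_inMeasure, preimage_ofPred_eq, compl_ofPred, Metric.mem_ball, not_lt]

lemma tendsto_measure_one_of_mem_inMeasure {μ : Measure Ω} [IsProbabilityMeasure μ] {l : Filter ι}
    {S : Set (ι × Ω)} (hS : S ∈ inMeasure μ l) :
    Tendsto (fun i => μ (Prod.mk i ⁻¹' S)) l (𝓝 1) := by
  have tendsto_one_sub : Tendsto (fun i => 1 - μ (Prod.mk i ⁻¹' S)ᶜ) l (𝓝 1) := by
    simpa only [tsub_zero] using
      ENNReal.Tendsto.sub tendsto_const_nhds (mem_inMeasure.1 hS) (.inl ENNReal.one_ne_top)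
  refine tendsto_of_tendsto_of_tendsto_of_le_of_le tendsto_one_sub tendsto_const_nhds (fun i => ?_)
    fun i => prob_le_one
  rw [tsub_le_iff_right, ← measure_univ (μ := μ), ← union_compl_self (Prod.mk i ⁻¹' S)]
  exact measure_union_le _ _

end InMeasure

section Empirical

variable {X : Type*} [MeasurableSpace X]

lemma isProbabilityMeasure_empMeas (T : X → X) {n : ℕ} (hn : n ≠ 0) (x : X) :
    IsProbabilityMeasure (empMeas T n x) := by
  constructor
  simp only [empMeas, Measure.smul_apply, Measure.finsetSum_apply, measure_univ, smul_eq_mul,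
    Finset.sum_const, Finset.card_range, nsmul_eq_mul, mul_one]
  exact ENNReal.inv_mul_cancel (Nat.cast_ne_zero.2 hn) (ENNReal.natCast_ne_top n)

lemma integral_empMeas {E : Type*} [NormedAddCommGroup E] [NormedSpace ℝ E] [CompleteSpace E]
    (T : X → X) (n : ℕ) (x : X) {f : X → E} (hf : StronglyMeasurable f) :
    ∫ y, f y ∂empMeas T n x = birkhoffAverage ℝ T f n x := by
  rw [empMeas, integral_smul_measure,
    integral_finsetSum_measure fun _ _ => integrable_dirac' hf enorm_lt_top]
  simp only [integral_dirac' f _ hf, ENNReal.toReal_inv, ENNReal.toReal_natCast, birkhoffAverage,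
    birkhoffSum]

/-- The empirical measure of the first `n + 1` points of the orbit of `x`, as a probability measure.
The shift by one excludes the empty orbit segment, for which `empMeas` is zero. -/
def empiricalMeasure (T : X → X) (n : ℕ) (x : X) : ProbabilityMeasure X :=
  ⟨empMeas T (n + 1) x, isProbabilityMeasure_empMeas T n.succ_ne_zero x⟩

variable [TopologicalSpace X] [OpensMeasurableSpace X]

theorem tendsto_empiricalMeasure_inMeasure {T : X → X} {μ : ProbabilityMeasure X}
    (hT : Ergodic T (μ : Measure X)) :
    Tendsto (fun p : ℕ × X => empiricalMeasure T p.1 p.2) (inMeasure μ atTop) (𝓝 μ) := by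
  refine ProbabilityMeasure.tendsto_iff_forall_integral_tendsto.2 fun f => ?_
  have hf : StronglyMeasurable f := f.continuous.stronglyMeasurable
  have memLp : MemLp f 2 (μ : Measure X) :=
    .of_bound hf.aestronglyMeasurable ‖f‖ (.of_forall f.norm_coe_le_norm)
  have tendsto_averages : TendstoInMeasure (μ : Measure X)
      (fun n => birkhoffAverage ℝ T f (n + 1)) atTop fun _ => ∫ x, f x ∂(μ : Measure X) :=
    fun r hr => (tendstoInMeasure_birkhoffAverage hT memLp r hr).comp (tendsto_add_atTop_nat 1)
  simp only [empiricalMeasure, ProbabilityMeasure.coe_mk, integral_empMeas T _ _ hf]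
  exact tendsto_inMeasure_nhds_iff.2 tendsto_averages

/-- The set `X_{n,F}` of points whose `n`-th empirical measure belongs to `F`. -/
def empiricalPreimage (T : X → X) (n : ℕ) (F : Set (ProbabilityMeasure X)) : Set X :=
  {x | ∃ h : IsProbabilityMeasure (empMeas T n x), (⟨empMeas T n x, h⟩ : ProbabilityMeasure X) ∈ F}

theorem tendsto_measure_empiricalPreimage {T : X → X} {μ : ProbabilityMeasure X}
    (hT : Ergodic T (μ : Measure X)) {F : Set (ProbabilityMeasure X)} (hF : F ∈ 𝓝 μ) :
    Tendsto (fun n => (μ : Measure X) (empiricalPreimage T n F)) atTop (𝓝 1) := by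
  rw [← tendsto_add_atTop_iff_nat 1]
  have preimage_eq (n : ℕ) : empiricalPreimage T (n + 1) F = {x | empiricalMeasure T n x ∈ F} :=
    Set.ext fun x => exists_prop_of_true (isProbabilityMeasure_empMeas T n.succ_ne_zero x)
  simp only [preimage_eq]
  exact tendsto_measure_one_of_mem_inMeasure (tendsto_empiricalMeasure_inMeasure hT hF)

end Empirical

section Bowen

variable {X : Type*} [PseudoMetricSpace X] {T : X → X} {n : ℕ} {ε : ℝ}

lemma bowenDist_self (T : X → X) (n : ℕ) (x : X) : bowenDist T n x x = 0 := by
  simp only [bowenDist, dist_self, Real.iSup_const_zero]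

lemma bowenDist_comm (T : X → X) (n : ℕ) (x y : X) : bowenDist T n x y = bowenDist T n y x := by
  simp only [bowenDist, dist_comm]

lemma bowenDist_lt (hε : 0 < ε) {x y : X} (h : ∀ j < n, dist (T^[j] x) (T^[j] y) < ε) :
    bowenDist T n x y < ε := by
  rcases isEmpty_or_nonempty (Fin n) with hn | hn
  · rwa [bowenDist, Real.iSup_of_isEmpty]
  · obtain ⟨j, hj⟩ :=
      exists_eq_ciSup_of_finite (f := fun j : Fin n => dist (T^[(j : ℕ)] x) (T^[(j : ℕ)] y))
    rw [bowenDist, ← hj]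
    exact h j j.isLt

/-- `(n, ε)`-separated sets: the sets competing in the definition of `sepNum`. -/
def IsBowenSeparated (T : X → X) (n : ℕ) (ε : ℝ) (E : Set X) : Prop :=
  E.Pairwise fun x y => ε ≤ bowenDist T n x y

lemma IsBowenSeparated.insert {E : Set X} (hE : IsBowenSeparated T n ε E) {z : X}
    (hz : ∀ x ∈ E, ε ≤ bowenDist T n x z) : IsBowenSeparated T n ε (insert z E) :=
  Set.Pairwise.insert hE fun x hx _ => ⟨bowenDist_comm T n x z ▸ hz x hx, hz x hx⟩

/-- Two points sharing an itinerary through a cover by `ε / 2`-balls are `d_n`-closer than `ε`. -/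
lemma IsBowenSeparated.card_le_pow (hε : 0 < ε) {E C : Finset X}
    (hE : IsBowenSeparated T n ε (E : Set X)) (hC : ∀ x, ∃ c ∈ C, dist x c < ε / 2) :
    E.card ≤ C.card ^ n := by
  choose center center_mem dist_center using hC
  let itinerary (x : X) (j : Fin n) : X := center (T^[(j : ℕ)] x)
  have itinerary_mem : ∀ x ∈ E, itinerary x ∈ Fintype.piFinset fun _ : Fin n => C :=
    fun x _ => Fintype.mem_piFinset.2 fun j => center_mem _
  have itinerary_injOn : Set.InjOn itinerary E := by
    intro x hx y hy hxy
    refine hE.eq hx hy (not_le.2 (bowenDist_lt hε fun j hj => ?_))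
    have same_center : center (T^[j] x) = center (T^[j] y) := congrFun hxy ⟨j, hj⟩
    calc dist (T^[j] x) (T^[j] y)
        ≤ dist (T^[j] x) (center (T^[j] x)) + dist (T^[j] y) (center (T^[j] x)) :=
          dist_triangle_right _ _ _
      _ < ε / 2 + ε / 2 :=
          add_lt_add (dist_center _) (same_center ▸ dist_center _)
      _ = ε := add_halves ε
  simpa only [Fintype.card_piFinset_const] using
    Finset.card_le_card_of_injOn itinerary itinerary_mem itinerary_injOn

lemma bddAbove_card_isBowenSeparated (hX : TotallyBounded (univ : Set X)) (T : X → X) (n : ℕ)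
    (hε : 0 < ε) (Z : Set X) :
    BddAbove {k | ∃ E : Finset X, (E : Set X) ⊆ Z ∧ E.card = k ∧ IsBowenSeparated T n ε E} := by
  obtain ⟨C, hCfin, hC⟩ := Metric.totallyBounded_iff.1 hX (ε / 2) (half_pos hε)
  refine ⟨hCfin.toFinset.card ^ n, ?_⟩
  rintro _ ⟨E, -, rfl, hE⟩
  refine hE.card_le_pow hε fun x => ?_
  simpa only [hCfin.mem_toFinset, mem_iUnion₂, Metric.mem_ball, exists_prop] using hC (mem_univ x)

lemma IsBowenSeparated.card_le_sepNum (hX : TotallyBounded (univ : Set X)) (hε : 0 < ε)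
    {Z : Set X} {E : Finset X} (hEZ : ↑E ⊆ Z) (hE : IsBowenSeparated T n ε (E : Set X)) :
    E.card ≤ sepNum T n ε Z :=
  le_csSup (bddAbove_card_isBowenSeparated hX T n hε Z) ⟨E, hEZ, rfl, hE⟩

lemma exists_isBowenSeparated_card_eq_sepNum (hX : TotallyBounded (univ : Set X)) (T : X → X)
    (n : ℕ) (hε : 0 < ε) (Z : Set X) :
    ∃ E : Finset X, (E : Set X) ⊆ Z ∧ E.card = sepNum T n ε Z ∧ IsBowenSeparated T n ε E :=
  Nat.sSup_mem
    (s := {k | ∃ E : Finset X, (E : Set X) ⊆ Z ∧ E.card = k ∧ IsBowenSeparated T n ε E})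
    ⟨0, ∅, by simp [IsBowenSeparated]⟩ (bddAbove_card_isBowenSeparated hX T n hε Z)

theorem exists_card_eq_sepNum_subset_biUnion (hX : TotallyBounded (univ : Set X)) (T : X → X)
    (n : ℕ) (hε : 0 < ε) (Z : Set X) :
    ∃ E : Finset X, E.card = sepNum T n ε Z ∧ Z ⊆ ⋃ x ∈ E, {y | bowenDist T n x y < ε} := by
  classical
  obtain ⟨E, hEZ, hEcard, hE⟩ := exists_isBowenSeparated_card_eq_sepNum hX T n hε Z
  refine ⟨E, hEcard, fun z hz => ?_⟩
  by_contra uncovered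
  have far : ∀ x ∈ E, ε ≤ bowenDist T n x z := by
    simpa only [mem_iUnion₂, mem_ofPred_eq, not_exists, not_lt] using uncovered
  have z_notMem : z ∉ E := fun h => (far z h).not_gt (by rwa [bowenDist_self])
  have insert_subset_Z : ↑(insert z E) ⊆ Z := by
    rw [Finset.coe_insert]
    exact insert_subset hz hEZ
  have insert_separated : IsBowenSeparated T n ε (insert z E : Finset X) := by
    rw [Finset.coe_insert]
    exact hE.insert far
  have card_insert_le := insert_separated.card_le_sepNum hX hε insert_subset_Z
  rw [Finset.card_insert_of_notMem z_notMem, hEcard] at card_insert_le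
  exact card_insert_le.not_gt (Nat.lt_succ_self _)

end Bowen

section Katok

lemma monotone_log_natCast : Monotone fun k : ℕ => Real.log k := by
  intro k m hkm
  rcases k.eq_zero_or_pos with rfl | hk
  · simpa only [Nat.cast_zero, Real.log_zero] using Real.log_natCast_nonneg m
  · exact Real.log_le_log (Nat.cast_pos.2 hk) (Nat.cast_le.2 hkm)

variable {X : Type*} [PseudoMetricSpace X] [MeasurableSpace X] {T : X → X} {μ : Measure X}
  {ε δ : ℝ}

lemma katokNum_le_sepNum (hX : TotallyBounded (univ : Set X)) (hε : 0 < ε) {n : ℕ} {Z : Set X}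
    (hZ : ENNReal.ofReal (1 - δ) < μ Z) : katokNum T μ n ε δ ≤ sepNum T n ε Z := by
  obtain ⟨E, hEcard, hcover⟩ := exists_card_eq_sepNum_subset_biUnion hX T n hε Z
  exact Nat.sInf_le ⟨E, hEcard, hZ.trans_le (measure_mono hcover)⟩

theorem katokUpperD_le_limsup_sepNum (hX : TotallyBounded (univ : Set X)) (hε : 0 < ε) (hδ : 0 < δ)
    {Z : ℕ → Set X} (hZ : Tendsto (fun n => μ (Z n)) atTop (𝓝 1)) :
    katokUpperD T μ ε δ ≤
      limsup (fun n : ℕ => ENNReal.ofReal (Real.log (sepNum T n ε (Z n))) / (n : ℝ≥0∞)) atTop := by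
  have lt_one : ENNReal.ofReal (1 - δ) < 1 := ENNReal.ofReal_lt_one.2 (sub_lt_self 1 hδ)
  refine limsup_le_limsup ?_
  filter_upwards [hZ.eventually (lt_mem_nhds lt_one)] with n hn
  exact ENNReal.div_le_div_right (ENNReal.ofReal_le_ofReal
    (monotone_log_natCast (katokNum_le_sepNum hX hε hn))) _

end Katok

end MMD

theorem stmt3_general {X : Type*} [MetricSpace X] [MeasurableSpace X] [OpensMeasurableSpace X]
    (hX : TotallyBounded (univ : Set X)) (T : X → X) (ε : ℝ) (hε : 0 < ε)
    (μ : Measure X) (hμp : IsProbabilityMeasure μ) (hμerg : Ergodic T μ) :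
    katokUpper T μ ε ≤ PSent T ⟨μ, hμp⟩ ε := by
  refine iSup₂_le fun δ hδ => le_iInf fun F => le_iInf₂ fun hF hμF => ?_
  have full_measure : Tendsto (fun n => μ (empiricalPreimage T n F)) atTop (𝓝 1) :=
    tendsto_measure_empiricalPreimage (μ := ⟨μ, hμp⟩) hμerg (hF.mem_nhds hμF)
  exact katokUpperD_le_limsup_sepNum hX hε hδ.1 full_measure

/-- Lemma 3.2 (first inequality): for every `ε > 0` and every ergodic invariant Borel
probability measure `μ`, `h̄^K_μ(T,ε) ≤ PS_μ(T,d,ε)`. -/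
theorem stmt3 {X : Type*} [MetricSpace X] [CompactSpace X] [MeasurableSpace X] [BorelSpace X]
    (T : X → X) (hT : Continuous T)
    (ε : ℝ) (hε : 0 < ε)
    (μ : Measure X) (hμp : IsProbabilityMeasure μ) (hμerg : Ergodic T μ) :
    katokUpper T μ ε ≤ PSent T ⟨μ, hμp⟩ ε :=
  stmt3_general isCompact_univ.totallyBounded T ε hε μ hμp hμerg
end
end

section
/- Let (X,T) be a topological dynamical system with a compatible metric d. Then for every ε>0 and every T-invariant Borel probability measure μ, R_{μ,L∞}(2ε) ≤ inf{ h_μ(T,P) : P a finite Borel partition of X with diam P ≤ ε }. -/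
open Filter MeasureTheory Set
open scoped ENNReal Topology

noncomputable section

open MMD

/-!
Choose a point in every cell of `P` and let `η_k` be the point chosen in the cell of `T^k ξ`. Then
`d(T^k ξ, η_k) ≤ ε < 2ε` always, so the expected number of errors is zero, while `η` depends only on
the cell of `P^n` containing `ξ`. Hence `I(ξ;η) ≤ H(η) ≤ H_μ(P^n)`; divide by `n` and let `n → ∞`.
-/

namespace MMD

section Partition

variable {X Y : Type*} [MeasurableSpace X] {P : Finset (Set X)}

namespace IsFinPartition

theorem exists_mem (hP : IsFinPartition P) (x : X) : ∃ A ∈ P, x ∈ A :=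
  mem_sUnion.1 (hP.2.2.symm ▸ mem_univ x)

/-- The cell `P(x)` of the partition `P` containing the point `x`. A function `f` depending only on
the cell is expressed as `f.FactorsThrough hP.cell`. -/
def cell (hP : IsFinPartition P) (x : X) : Set X :=
  (hP.exists_mem x).choose

theorem cell_mem (hP : IsFinPartition P) (x : X) : hP.cell x ∈ P :=
  (hP.exists_mem x).choose_spec.1

theorem mem_cell (hP : IsFinPartition P) (x : X) : x ∈ hP.cell x :=
  (hP.exists_mem x).choose_spec.2

theorem eq_of_mem_of_mem (hP : IsFinPartition P) {A B : Set X} (hA : A ∈ P) (hB : B ∈ P) {x : X}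
    (hxA : x ∈ A) (hxB : x ∈ B) : A = B :=
  by_contra fun hAB => disjoint_left.1 (hP.2.1 A hA B hB hAB) hxA hxB

theorem cell_eq (hP : IsFinPartition P) {A : Set X} (hA : A ∈ P) {x : X} (hx : x ∈ A) :
    hP.cell x = A :=
  hP.eq_of_mem_of_mem (hP.cell_mem x) hA (hP.mem_cell x) hx

theorem measurable_of_factorsThrough_cell [MeasurableSpace Y] (hP : IsFinPartition P) {f : X → Y}
    (hf : f.FactorsThrough hP.cell) : Measurable f := by
  classical
  intro U _
  have preimage_eq : f ⁻¹' U = ⋃ A ∈ P.filter (· ⊆ f ⁻¹' U), A := by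
    refine Subset.antisymm (fun x hx => ?_)
      (iUnion₂_subset fun A hA => (Finset.mem_filter.1 hA).2)
    refine mem_biUnion (Finset.mem_filter.2 ⟨hP.cell_mem x, fun y hy => ?_⟩) (hP.mem_cell x)
    rwa [mem_preimage, hf (hP.cell_eq (hP.cell_mem x) hy)]
  rw [preimage_eq]
  exact Finset.measurableSet_biUnion _ fun A hA => hP.1 A (Finset.mem_filter.1 hA).1

theorem finite_range_of_factorsThrough_cell [Nonempty Y] (hP : IsFinPartition P) {f : X → Y}
    (hf : f.FactorsThrough hP.cell) : (range f).Finite := by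
  obtain ⟨g, rfl⟩ := (Function.factorsThrough_iff f).1 hf
  rw [range_comp]
  exact (P.finite_toSet.subset (range_subset_iff.2 hP.cell_mem)).image g

/-- A point of the cell of `x`, chosen so as to depend only on that cell; it serves as the
approximation of `x` at the scale of the partition. -/
def representative (hP : IsFinPartition P) (x : X) : X :=
  Set.Nonempty.some ⟨x, hP.mem_cell x⟩

theorem representative_mem_cell (hP : IsFinPartition P) (x : X) :
    hP.representative x ∈ hP.cell x :=
  Set.Nonempty.some_mem _

theorem factorsThrough_representative (hP : IsFinPartition P) :
    hP.representative.FactorsThrough hP.cell := by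
  intro x y hxy
  simp only [representative, hxy]

theorem dist_representative_le [PseudoMetricSpace X] [BoundedSpace X] (hP : IsFinPartition P)
    {ε : ℝ} (hdiam : ∀ A ∈ P, Metric.diam A ≤ ε) (x : X) : dist x (hP.representative x) ≤ ε :=
  (Metric.dist_le_diam_of_mem (Bornology.IsBounded.all _) (hP.mem_cell x)
    (hP.representative_mem_cell x)).trans (hdiam _ (hP.cell_mem x))

end IsFinPartition

end Partition

section Join

variable {X : Type*} {T : X → X} {P : Finset (Set X)} {n : ℕ}

theorem mem_joinN {A : Set X} :
    A ∈ joinN T P n ↔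
      ∃ f : Fin n → Set X, (∀ j, f j ∈ P) ∧ ⋂ j : Fin n, T^[(j : ℕ)] ⁻¹' f j = A := by
  simp only [joinN, Finset.mem_image, Fintype.mem_piFinset]

variable [MeasurableSpace X]

theorem IsFinPartition.joinN (hP : IsFinPartition P) (hT : Measurable T) (n : ℕ) :
    IsFinPartition (joinN T P n) := by
  refine ⟨fun A hA => ?_, fun A hA B hB hAB => ?_, eq_univ_of_forall fun x => ?_⟩
  · obtain ⟨f, hf, rfl⟩ := mem_joinN.1 hA
    exact MeasurableSet.iInter fun j => hT.iterate j (hP.1 _ (hf j))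
  · obtain ⟨f, hf, rfl⟩ := mem_joinN.1 hA
    obtain ⟨g, hg, rfl⟩ := mem_joinN.1 hB
    refine disjoint_left.2 fun x hxf hxg => hAB ?_
    have hfg : f = g := funext fun j =>
      hP.eq_of_mem_of_mem (hf j) (hg j) (mem_iInter.1 hxf j) (mem_iInter.1 hxg j)
    rw [hfg]
  · exact ⟨_, mem_joinN.2 ⟨fun j => hP.cell (T^[(j : ℕ)] x), fun j => hP.cell_mem _, rfl⟩,
      mem_iInter.2 fun j => hP.mem_cell _⟩

theorem IsFinPartition.cell_joinN (hP : IsFinPartition P) (hT : Measurable T) (x : X) :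
    (hP.joinN hT n).cell x = ⋂ j : Fin n, T^[(j : ℕ)] ⁻¹' hP.cell (T^[(j : ℕ)] x) :=
  (hP.joinN hT n).cell_eq (mem_joinN.2 ⟨_, fun _ => hP.cell_mem _, rfl⟩)
    (mem_iInter.2 fun _ => hP.mem_cell _)

/-- The first `n` values of the observable `f` along the orbit of `x`. -/
def itinerary {Y : Type*} (T : X → X) (f : X → Y) (n : ℕ) (x : X) : Fin n → Y :=
  fun k => f (T^[(k : ℕ)] x)

theorem IsFinPartition.factorsThrough_itinerary {Y : Type*} (hP : IsFinPartition P)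
    (hT : Measurable T) {f : X → Y} (hf : f.FactorsThrough hP.cell) :
    (itinerary T f n).FactorsThrough (hP.joinN hT n).cell := by
  intro x y hxy
  have hx : x ∈ ⋂ j : Fin n, T^[(j : ℕ)] ⁻¹' hP.cell (T^[(j : ℕ)] y) := by
    rw [← hP.cell_joinN hT, ← hxy]
    exact (hP.joinN hT n).mem_cell x
  exact funext fun k => hf (hP.cell_eq (hP.cell_mem _) (mem_iInter.1 hx k))

end Join

section MutualInfo

theorem mul_log_div_mul_le {a b c : ℝ} (ha : 0 ≤ a) (hab : a ≤ b) (hac : a ≤ c) :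
    a * Real.log (a / (b * c)) ≤ a * -Real.log c := by
  rcases ha.eq_or_lt with rfl | ha
  · simp only [zero_mul, le_refl]
  have hb : 0 < b := ha.trans_le hab
  have hc : 0 < c := ha.trans_le hac
  refine mul_le_mul_of_nonneg_left ?_ ha.le
  rw [← Real.log_inv]
  refine Real.log_le_log (by positivity) ?_
  calc a / (b * c) ≤ b / (b * c) := by gcongr
    _ = c⁻¹ := by field_simp

variable {Ω A B : Type*} [MeasurableSpace Ω] [MeasurableSpace A]

theorem ofReal_sum_negMulLog_le_entP (μ : Measure Ω) (Q : Finset (Set Ω)) :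
    ENNReal.ofReal (∑ C ∈ Q, Real.negMulLog (μ.real C)) ≤ entP μ Q := by
  simp only [entP, ← neg_mul]
  exact Finset.le_sum_of_subadditive _ ENNReal.ofReal_zero.le (fun _ _ => ENNReal.ofReal_add_le) _ _

variable {μ : Measure Ω} [IsFiniteMeasure μ]

theorem IsFinPartition.sum_measureReal {P : Finset (Set Ω)} (hP : IsFinPartition P) :
    ∑ C ∈ P, μ.real C = μ.real univ := by
  rw [← hP.2.2, sUnion_eq_biUnion]
  exact (measureReal_biUnion_finset (fun C hC D hD => hP.2.1 C hC D hD) hP.1).symm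

theorem IsFinPartition.sum_measureReal_inter_preimage {p : Finset (Set A)}
    (hp : IsFinPartition p) {ξ : Ω → A} (hξ : Measurable ξ) (s : Set Ω) :
    ∑ t ∈ p, μ.real (s ∩ ξ ⁻¹' t) = μ.real s := by
  have apply_eq {t : Set A} (ht : MeasurableSet t) :
      ((μ.restrict s).map ξ).real t = μ.real (s ∩ ξ ⁻¹' t) := by
    rw [map_measureReal_apply hξ ht, measureReal_restrict_apply (hξ ht), inter_comm]
  calc ∑ t ∈ p, μ.real (s ∩ ξ ⁻¹' t)
      = ∑ t ∈ p, ((μ.restrict s).map ξ).real t :=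
        Finset.sum_congr rfl fun t ht => (apply_eq (hp.1 t ht)).symm
    _ = μ.real s := by
        rw [hp.sum_measureReal, apply_eq MeasurableSet.univ, preimage_univ, inter_univ]

theorem sum_mul_log_le_sum_negMulLog {p : Finset (Set A)} (hp : IsFinPartition p) {ξ : Ω → A}
    (hξ : Measurable ξ) (q : Finset (Set B)) (η : Ω → B) :
    ∑ s ∈ p, ∑ t ∈ q, μ.real (ξ ⁻¹' s ∩ η ⁻¹' t) *
        Real.log (μ.real (ξ ⁻¹' s ∩ η ⁻¹' t) / (μ.real (ξ ⁻¹' s) * μ.real (η ⁻¹' t))) ≤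
      ∑ t ∈ q, Real.negMulLog (μ.real (η ⁻¹' t)) := by
  calc _ ≤ ∑ s ∈ p, ∑ t ∈ q, μ.real (ξ ⁻¹' s ∩ η ⁻¹' t) * -Real.log (μ.real (η ⁻¹' t)) := by
        refine Finset.sum_le_sum fun s _ => Finset.sum_le_sum fun t _ => ?_
        have inter_le_left : μ.real (ξ ⁻¹' s ∩ η ⁻¹' t) ≤ μ.real (ξ ⁻¹' s) :=
          measureReal_mono inter_subset_left
        have inter_le_right : μ.real (ξ ⁻¹' s ∩ η ⁻¹' t) ≤ μ.real (η ⁻¹' t) :=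
          measureReal_mono inter_subset_right
        exact mul_log_div_mul_le measureReal_nonneg inter_le_left inter_le_right
    _ = ∑ t ∈ q, (∑ s ∈ p, μ.real (η ⁻¹' t ∩ ξ ⁻¹' s)) * -Real.log (μ.real (η ⁻¹' t)) := by
        rw [Finset.sum_comm]
        simp only [Finset.sum_mul, inter_comm]
    _ = ∑ t ∈ q, Real.negMulLog (μ.real (η ⁻¹' t)) := by
        simp only [hp.sum_measureReal_inter_preimage hξ, Real.negMulLog, mul_neg, neg_mul]

theorem measureReal_inter_preimage_mul_neg_log_le {Q : Finset (Set Ω)} (hQ : IsFinPartition Q)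
    {η : Ω → B} (hη : η.FactorsThrough hQ.cell) {C : Set Ω} (hC : C ∈ Q) (t : Set B) :
    μ.real (C ∩ η ⁻¹' t) * -Real.log (μ.real (η ⁻¹' t)) ≤
      μ.real (C ∩ η ⁻¹' t) * -Real.log (μ.real C) := by
  rcases (measureReal_nonneg (μ := μ) (s := C ∩ η ⁻¹' t)).eq_or_lt with h_zero | h_pos
  · simp only [← h_zero, zero_mul, le_refl]
  obtain ⟨x, hxC, hxt⟩ := nonempty_of_measureReal_ne_zero h_pos.ne'
  have hC_sub : C ⊆ η ⁻¹' t := fun y hy => by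
    rwa [mem_preimage, hη ((hQ.cell_eq hC hy).trans (hQ.cell_eq hC hxC).symm)]
  have hC_pos : 0 < μ.real C := h_pos.trans_le (measureReal_mono inter_subset_left)
  have hC_le : μ.real C ≤ μ.real (η ⁻¹' t) := measureReal_mono hC_sub
  gcongr

variable [MeasurableSpace B]

theorem sum_negMulLog_preimage_le {Q : Finset (Set Ω)} (hQ : IsFinPartition Q)
    {q : Finset (Set B)} (hq : IsFinPartition q) {η : Ω → B} (hη : η.FactorsThrough hQ.cell) :
    ∑ t ∈ q, Real.negMulLog (μ.real (η ⁻¹' t)) ≤ ∑ C ∈ Q, Real.negMulLog (μ.real C) := by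
  have hηm : Measurable η := hQ.measurable_of_factorsThrough_cell hη
  calc ∑ t ∈ q, Real.negMulLog (μ.real (η ⁻¹' t))
      = ∑ t ∈ q, (∑ C ∈ Q, μ.real (η ⁻¹' t ∩ id ⁻¹' C)) * -Real.log (μ.real (η ⁻¹' t)) := by
        simp only [hQ.sum_measureReal_inter_preimage measurable_id, Real.negMulLog, mul_neg,
          neg_mul]
    _ = ∑ C ∈ Q, ∑ t ∈ q, μ.real (C ∩ η ⁻¹' t) * -Real.log (μ.real (η ⁻¹' t)) := by
        rw [Finset.sum_comm]
        simp only [Finset.sum_mul, inter_comm, preimage_id]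
    _ ≤ ∑ C ∈ Q, ∑ t ∈ q, μ.real (C ∩ η ⁻¹' t) * -Real.log (μ.real C) :=
        Finset.sum_le_sum fun C hC => Finset.sum_le_sum fun t _ =>
          measureReal_inter_preimage_mul_neg_log_le hQ hη hC t
    _ = ∑ C ∈ Q, Real.negMulLog (μ.real C) := by
        refine Finset.sum_congr rfl fun C _ => ?_
        rw [← Finset.sum_mul, hq.sum_measureReal_inter_preimage hηm, Real.negMulLog, mul_neg,
          neg_mul]

theorem mutualInfo_le_entP {Q : Finset (Set Ω)} (hQ : IsFinPartition Q) {ξ : Ω → A}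
    (hξ : Measurable ξ) {η : Ω → B} (hη : η.FactorsThrough hQ.cell) :
    mutualInfo μ ξ η ≤ entP μ Q :=
  iSup₂_le fun _ hp => iSup₂_le fun q hq =>
    (ENNReal.ofReal_le_ofReal <| (sum_mul_log_le_sum_negMulLog hp hξ q η).trans
      (sum_negMulLog_preimage_le hQ hq hη)).trans (ofReal_sum_negMulLog_le_entP μ Q)

theorem mutualInfo_map {Ω' : Type*} [MeasurableSpace Ω'] {ν : Measure Ω} {g : Ω → Ω'}
    (hg : Measurable g) {ξ : Ω' → A} (hξ : Measurable ξ) {η : Ω' → B} (hη : Measurable η) :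
    mutualInfo (ν.map g) ξ η = mutualInfo ν (ξ ∘ g) (η ∘ g) := by
  unfold mutualInfo
  refine iSup_congr fun p => iSup_congr fun hp => iSup_congr fun q => iSup_congr fun hq =>
    congrArg ENNReal.ofReal ?_
  refine Finset.sum_congr rfl fun s hs => Finset.sum_congr rfl fun t ht => ?_
  have hξs : MeasurableSet (ξ ⁻¹' s) := hξ (hp.1 s hs)
  have hηt : MeasurableSet (η ⁻¹' t) := hη (hq.1 t ht)
  simp only [Measure.map_apply hg, hξs, hηt, hξs.inter hηt, preimage_inter, preimage_comp]

end MutualInfo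

section RateDistortion

variable {X : Type*} [PseudoMetricSpace X] [MeasurableSpace X] {T : X → X} {μ : Measure X}
  [IsProbabilityMeasure μ] {ε δ s : ℝ} {n : ℕ}

theorem RDistLInftyS_le_mutualInfo_div (hn : 0 < n) {η : X → Fin n → X} (hη : Measurable η)
    {S : Set X} (hS : S.Finite) (hηS : ∀ x k, η x k ∈ S)
    (hdist : ∫⁻ x, (Nat.card {k : Fin n // δ ≤ dist (T^[(k : ℕ)] x) (η x k)} : ℝ≥0∞) ∂μ <
      ENNReal.ofReal (s * n)) :
    RDistLInftyS T μ δ s ≤ mutualInfo μ id η / n := by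
  have hg : Measurable fun x => (x, η x) := measurable_id.prodMk hη
  have hν : IsProbabilityMeasure (μ.map fun x => (x, η x)) :=
    Measure.isProbabilityMeasure_map hg.aemeasurable
  refine iInf₂_le_of_le n hn <| iInf₂_le_of_le _ hν <| iInf₂_le_of_le ?_ ?_ <|
    iInf_le_of_le ?_ ?_
  · rw [Measure.map_map measurable_fst hg]
    exact Measure.map_id
  · refine ⟨hS.toFinset, prob_le_one.antisymm ?_⟩
    refine le_trans ?_ (Measure.le_map_apply hg.aemeasurable _)
    simp only [preimage_ofPred_eq, hS.mem_toFinset, hηS, implies_true, ofPred_true, measure_univ,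
      le_refl]
  · exact (lintegral_map_le _ _).trans_lt hdist
  · rw [mutualInfo_map hg measurable_fst measurable_snd]
    rfl

theorem RDistLInftyS_le_entP_joinN_div [BoundedSpace X] (hT : Measurable T)
    {P : Finset (Set X)} (hP : IsFinPartition P) (hdiam : ∀ A ∈ P, Metric.diam A ≤ ε)
    (hεδ : ε < δ) (hs : 0 < s) (hn : 0 < n) :
    RDistLInftyS T μ δ s ≤ entP μ (joinN T P n) / n := by
  have : Nonempty X := μ.nonempty_of_neZero
  have hrep := hP.factorsThrough_representative
  have hitin : (itinerary T hP.representative n).FactorsThrough (hP.joinN hT n).cell :=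
    hP.factorsThrough_itinerary hT hrep
  have card_eq_zero (x : X) : Nat.card {k : Fin n //
      δ ≤ dist (T^[(k : ℕ)] x) (itinerary T hP.representative n x k)} = 0 := by
    have : IsEmpty {k : Fin n //
        δ ≤ dist (T^[(k : ℕ)] x) (itinerary T hP.representative n x k)} :=
      ⟨fun k => k.2.not_gt ((hP.dist_representative_le hdiam _).trans_lt hεδ)⟩
    exact Nat.card_of_isEmpty
  calc RDistLInftyS T μ δ s
      ≤ mutualInfo μ id (itinerary T hP.representative n) / n := by
        refine RDistLInftyS_le_mutualInfo_div hn
          ((hP.joinN hT n).measurable_of_factorsThrough_cell hitin)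
          (hP.finite_range_of_factorsThrough_cell hrep) (fun x k => mem_range_self _) ?_
        simp only [card_eq_zero, Nat.cast_zero, lintegral_zero, ENNReal.ofReal_pos]
        positivity
    _ ≤ entP μ (joinN T P n) / n :=
        ENNReal.div_le_div_right (mutualInfo_le_entP (hP.joinN hT n) measurable_id hitin) _

end RateDistortion

end MMD

theorem stmt9_general {X : Type*} [PseudoMetricSpace X] [BoundedSpace X] [MeasurableSpace X]
    {T : X → X} (hT : Measurable T) {ε δ : ℝ} (hεδ : ε < δ) (μ : Measure X)
    [IsProbabilityMeasure μ] : RDistLInfty T μ δ ≤ infEntRate T μ ε := by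
  refine iSup₂_le fun s hs => le_iInf₂ fun P hP => le_iInf fun hdiam => ?_
  refine le_liminf_of_le (by isBoundedDefault) ?_
  filter_upwards [eventually_gt_atTop 0] with n hn
  exact RDistLInftyS_le_entP_joinN_div hT hP hdiam hεδ hs hn

/-- Proposition 3.4: for every `ε > 0` and every invariant Borel probability measure `μ`,
`R_{μ,L∞}(2ε) ≤ inf { h_μ(T,P) : P a finite Borel partition with diam P ≤ ε }`. -/
theorem stmt9 {X : Type*} [MetricSpace X] [CompactSpace X] [MeasurableSpace X] [BorelSpace X]
    (T : X → X) (hT : Continuous T)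
    (ε : ℝ) (hε : 0 < ε)
    (μ : Measure X) (hμp : IsProbabilityMeasure μ) (hμinv : MeasurePreserving T μ μ) :
    RDistLInfty T μ (2 * ε) ≤ infEntRate T μ ε :=
  stmt9_general hT.measurable (by linarith) μ
end
end
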